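/- Let k ≥ 2, let T be a tournament, and let T' be the tournament whose vertex set consists of two vertex-disjoint copies T₁ and T₂ of T together with one additional vertex z, where inside T₁ and T₂ the edges are as in T, every vertex of T₁ beats every vertex of T₂, every vertex of T₂ beats z, and z beats every vertex of T₁. Then T is (k−1)-colorable if and only if T' is k-colorable. -/

import Mathlib

/-!
If `T` is coloured with `k - 1` colours, colour both copies in the same way and give `z` a
new colour: a colour class of `T'` other than `{z}` is a class of `T₁` followed by a class of
`T₂`, with no edge back, so it is acyclic (`acyclicOn_extT`).
Conversely, three vertices of `T₁`, `T₂` and `{z}`, one from each, form a directed triangle, so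
in a `k`-colouring of `T'` one of the two copies avoids the colour of `z`, and this copy is
coloured with the remaining `k - 1` colours (`KColorable.of_avoids`).
-/

def IsTournament {V : Type*} (E : V → V → Prop) : Prop :=
  (∀ x, ¬ E x x) ∧ ∀ x y : V, x ≠ y → (E x y ↔ ¬ E y x)

def AcyclicOn {V : Type*} (E : V → V → Prop) (S : Set V) : Prop :=
  ∀ x, ¬ Relation.TransGen (fun a b => a ∈ S ∧ b ∈ S ∧ E a b) x x

def KColorable {V : Type*} (E : V → V → Prop) (k : ℕ) : Prop :=
  ∃ c : V → Fin k, ∀ i : Fin k, AcyclicOn E {v | c v = i}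

/-- The tournament `T'` built from a tournament `T` (with edge relation `E`): two
disjoint copies `T₁` (the left summand) and `T₂` (the middle summand) of `T`
together with an extra vertex `z` (the `Unit` summand); every vertex of `T₁` beats
every vertex of `T₂`, every vertex of `T₂` beats `z`, and `z` beats every vertex of
`T₁`. -/
def extT {V : Type*} (E : V → V → Prop) : V ⊕ V ⊕ Unit → V ⊕ V ⊕ Unit → Prop :=
  fun x y =>
    match x, y with
    | Sum.inl a, Sum.inl b => E a b
    | Sum.inl _, Sum.inr (Sum.inl _) => True
    | Sum.inl _, Sum.inr (Sum.inr _) => False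
    | Sum.inr (Sum.inl _), Sum.inl _ => False
    | Sum.inr (Sum.inl a), Sum.inr (Sum.inl b) => E a b
    | Sum.inr (Sum.inl _), Sum.inr (Sum.inr _) => True
    | Sum.inr (Sum.inr _), Sum.inl _ => True
    | Sum.inr (Sum.inr _), Sum.inr _ => False

theorem AcyclicOn.of_map {V W : Type*} {E : V → V → Prop} {F : W → W → Prop}
    {S : Set V} {S' : Set W} (f : V → W) (hS : ∀ a ∈ S, f a ∈ S')
    (hE : ∀ a b, E a b → F (f a) (f b)) (h : AcyclicOn F S') : AcyclicOn E S := by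
  intro x hx
  exact h (f x) (Relation.TransGen.lift f
    (fun a b hab => ⟨hS a hab.1, hS b hab.2.1, hE a b hab.2.2⟩) _ _ hx)

theorem KColorable.of_avoids {V : Type*} {E : V → V → Prop} {m : ℕ} (c : V → Fin (m + 1))
    (hc : ∀ i, AcyclicOn E {v | c v = i}) (p : Fin (m + 1)) (hp : ∀ v, c v ≠ p) :
    KColorable E m := by
  choose d hd using fun v => Fin.exists_succAbove_eq (hp v)
  refine ⟨d, fun i => AcyclicOn.of_map id ?_ (fun _ _ h => h) (hc (p.succAbove i))⟩
  intro a ha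
  have ha' : d a = i := ha
  exact (hd a).symm.trans (congrArg _ ha')

/-- The possible endpoints `x`, `y` of a directed walk of `T'` that avoids `z`, when `r` relates
the endpoints of the walks inside a single copy of `T`. -/
def lexRel {V : Type*} (r : V → V → Prop) : V ⊕ V ⊕ Unit → V ⊕ V ⊕ Unit → Prop
  | Sum.inl a, Sum.inl b => r a b
  | Sum.inl _, Sum.inr (Sum.inl _) => True
  | Sum.inr (Sum.inl a), Sum.inr (Sum.inl b) => r a b
  | _, _ => False

theorem lexRel_trans {V : Type*} {r : V → V → Prop} (hr : ∀ a b c, r a b → r b c → r a c)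
    (x y z : V ⊕ V ⊕ Unit) (hxy : lexRel r x y) (hyz : lexRel r y z) : lexRel r x z := by
  rcases x with x | x | x <;> rcases y with y | y | y <;> rcases z with z | z | z <;>
    simp only [lexRel] at * <;> exact hr _ _ _ hxy hyz

/-- A set of vertices of `T'` without `z` is acyclic as soon as its traces on both copies lie in
an acyclic set of `T`, since no edge returns from `T₂` to `T₁`. -/
theorem acyclicOn_extT {V : Type*} {E : V → V → Prop} {A : Set V} (hA : AcyclicOn E A)
    {S : Set (V ⊕ V ⊕ Unit)} (h1 : ∀ a, Sum.inl a ∈ S → a ∈ A)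
    (h2 : ∀ a, Sum.inr (Sum.inl a) ∈ S → a ∈ A) (hz : Sum.inr (Sum.inr ()) ∉ S) :
    AcyclicOn (extT E) S := by
  let r := Relation.TransGen (fun a b => a ∈ A ∧ b ∈ A ∧ E a b)
  have step : ∀ x y, (x ∈ S ∧ y ∈ S ∧ extT E x y) → lexRel r x y := by
    rintro (x | x | x) (y | y | y) ⟨hx, hy, hxy⟩
    · exact .single ⟨h1 _ hx, h1 _ hy, hxy⟩
    · trivial
    · exact hxy
    · exact hxy
    · exact .single ⟨h2 _ hx, h2 _ hy, hxy⟩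
    · exact hz hy
    all_goals exact hz hx
  intro x hx
  have hlex : lexRel r x x := by
    have key : ∀ y, Relation.TransGen (fun a b => a ∈ S ∧ b ∈ S ∧ extT E a b) x y →
        lexRel r x y := by
      intro y hy
      induction hy with
      | single h => exact step _ _ h
      | tail _ h ih => exact lexRel_trans (fun _ _ _ => Relation.TransGen.trans) _ _ _ ih (step _ _ h)
    exact key x hx
  rcases x with x | x | x
  · exact hA x hlex
  · exact hA x hlex
  · exact hlex

/-- for `k ≥ 2`, a tournament `T` is `(k-1)`-colorable iff the
tournament `T'` is `k`-colorable. -/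
theorem stmt17 (k : ℕ) (hk : 2 ≤ k) (V : Type*) [Fintype V]
    (E : V → V → Prop) (hT : IsTournament E) :
    KColorable E (k - 1) ↔ KColorable (extT E) k := by
  obtain ⟨m, rfl⟩ : ∃ m, k = m + 1 := ⟨k - 1, by omega⟩
  rw [Nat.add_sub_cancel]
  constructor
  · rintro ⟨c, hc⟩
    refine ⟨Sum.elim (fun a => (c a).castSucc)
      (Sum.elim (fun a => (c a).castSucc) fun _ => Fin.last m), fun i => ?_⟩
    induction i using Fin.lastCases with
    | last =>
      -- the last class is `{z}`, which carries no edge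
      intro x hx
      obtain ⟨y, ⟨h1, h2, h3⟩, -⟩ := Relation.TransGen.head'_iff.1 hx
      rcases x with x | x | x
      · exact Fin.castSucc_ne_last _ h1
      · exact Fin.castSucc_ne_last _ h1
      · rcases y with y | y | y
        · exact Fin.castSucc_ne_last _ h2
        · exact Fin.castSucc_ne_last _ h2
        · exact h3
    | cast i =>
      refine acyclicOn_extT (hc i) ?_ ?_ ?_
      · exact fun a ha => Fin.castSucc_injective m ha
      · exact fun a ha => Fin.castSucc_injective m ha
      · exact fun h => Fin.castSucc_ne_last _ (Eq.symm h)
  · rintro ⟨c, hc⟩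
    by_cases h1 : ∀ v, c (Sum.inl v) ≠ c (Sum.inr (Sum.inr ()))
    · exact KColorable.of_avoids (fun v => c (Sum.inl v))
        (fun i => AcyclicOn.of_map Sum.inl (fun _ h => h) (fun _ _ h => h) (hc i)) _ h1
    by_cases h2 : ∀ v, c (Sum.inr (Sum.inl v)) ≠ c (Sum.inr (Sum.inr ()))
    · exact KColorable.of_avoids (fun v => c (Sum.inr (Sum.inl v)))
        (fun i => AcyclicOn.of_map (fun v => Sum.inr (Sum.inl v)) (fun _ h => h)
          (fun _ _ h => h) (hc i)) _ h2
    push Not at h1 h2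
    obtain ⟨a, ha⟩ := h1
    obtain ⟨b, hb⟩ := h2
    exact (hc _ (Sum.inr (Sum.inr ())) (((Relation.TransGen.single ⟨rfl, ha, trivial⟩).tail
      ⟨ha, hb, trivial⟩).tail ⟨hb, rfl, trivial⟩)).elim
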